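/- Let d ≥ 2 and α = (α₁,…,α_d) ∈ (−1,∞)^d. Neither the non-centered maximal operator M_{μ_α}^{Q+} on ℝ^d_+ (supremum over the truncated cubes Q(z,r) = {y ∈ ℝ^d_+ : |z − y|_∞ < r} with z ∈ ℝ^d_+) nor the non-centered maximal operator M_{μ_α}^{B+} on ℝ^d_+ (supremum over the truncated Euclidean balls B(z,r) = {y ∈ ℝ^d_+ : |z − y|₂ < r} with z ∈ ℝ^d_+) is of weak type (1,1) with respect to (ℝ^d_+, dμ_α). -/

import Mathlib

/-!
On a box `[a / c, c * a]^d` a Laguerre measure is comparable, uniformly in `a`, to a multiple of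
`exp (-∑ i, x i) dx`, on which translations act by scalars. For the latter measure, a positive
fraction of the mass of a ball of radius `h ^ 2` lies within `2 * h + 1` of the hyperplane
`x i = x j` through its center: a point farther away remains in the ball when moved by
`-((h + 1) e_i - h e_j)`, which gains a factor `e`. The slabs are much thinner than the balls, so
for large `h` one can find `n` balls with centers of equal coordinate sum, hence of equal measure
`K`, which share a common core while their slabs are disjoint. Their union has measure at least a
fixed multiple of `n * K`, whereas the weak type inequality, tested on the indicator of the core,
bounds it by a fixed multiple of `K`.
-/

open MeasureTheory ENNReal

/-- The Laguerre-type measure `dμ_α(x) = ∏ |x_i|^{α_i} exp(-|x_i|) dx` on `ℝ^d`. -/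
noncomputable def laguerreMeasure (d : ℕ) (α : Fin d → ℝ) : Measure (Fin d → ℝ) :=
  volume.withDensity
    (fun x => ENNReal.ofReal (∏ i, |x i| ^ (α i) * Real.exp (-|x i|)))

/-- The positive orthant `ℝ^d_+ = (0,∞)^d`. -/
def posOrthant (d : ℕ) : Set (Fin d → ℝ) := {x | ∀ i, 0 < x i}

/-- The family of truncated cubes `Q(z,r) = {y ∈ ℝ^d_+ : |z - y|_∞ < r}`, `z ∈ ℝ^d_+`. -/
def cubesPlus (d : ℕ) : Set (Set (Fin d → ℝ)) :=
  {B | ∃ (z : Fin d → ℝ) (r : ℝ), z ∈ posOrthant d ∧ 0 < r ∧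
    B = {y | y ∈ posOrthant d ∧ ∀ i, |z i - y i| < r}}

/-- The family of truncated Euclidean balls `B(z,r) = {y ∈ ℝ^d_+ : |z - y|₂ < r}`,
`z ∈ ℝ^d_+`. -/
def euclideanBallsPlus (d : ℕ) : Set (Set (Fin d → ℝ)) :=
  {B | ∃ (z : Fin d → ℝ) (r : ℝ), z ∈ posOrthant d ∧ 0 < r ∧
    B = {y | y ∈ posOrthant d ∧ Real.sqrt (∑ i, (z i - y i) ^ 2) < r}}

/-- The non-centered Hardy–Littlewood maximal operator associated with a measure `μ` and a
family `F` of balls: `M f (x) = sup { (1/μ B) ∫_B |f| dμ : x ∈ B ∈ F, μ B > 0 }`. -/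
noncomputable def maximalOp (d : ℕ) (μ : Measure (Fin d → ℝ))
    (F : Set (Set (Fin d → ℝ))) (f : (Fin d → ℝ) → ℝ) (x : Fin d → ℝ) : ℝ≥0∞ :=
  ⨆ (B : Set (Fin d → ℝ)) (_ : B ∈ F) (_ : x ∈ B) (_ : 0 < μ B),
    (∫⁻ y in B, ENNReal.ofReal |f y| ∂μ) / μ B

/-- The operator `T` is of weak type `(1,1)` with respect to `μ`. -/
def HasWeakTypeOneOne {X : Type*} [MeasurableSpace X] (T : (X → ℝ) → X → ℝ≥0∞)
    (μ : Measure X) : Prop :=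
  ∃ C : ℝ, 0 < C ∧ ∀ f : X → ℝ, Integrable f μ → ∀ lam : ℝ, 0 < lam →
    μ {x | ENNReal.ofReal lam < T f x} ≤
      ENNReal.ofReal (C / lam) * ∫⁻ x, ENNReal.ofReal |f x| ∂μ

section WeakType

variable {d : ℕ} {μ : Measure (Fin d → ℝ)} {F : Set (Set (Fin d → ℝ))}

lemma lintegral_abs_indicator_one {X : Type*} [MeasurableSpace X] {ν : Measure X} {N : Set X}
    (hN : MeasurableSet N) :
    ∫⁻ x, ENNReal.ofReal |N.indicator (1 : X → ℝ) x| ∂ν = ν N := by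
  rw [← lintegral_indicator_one hN]
  congr with x
  by_cases hx : x ∈ N <;> simp [hx]

lemma div_measure_le_maximalOp_indicator {B N : Set (Fin d → ℝ)} (hN : MeasurableSet N)
    (hB : B ∈ F) (hNB : N ⊆ B) (hμN : μ N ≠ 0) {x : Fin d → ℝ} (hx : x ∈ B) :
    μ N / μ B ≤ maximalOp d μ F (N.indicator 1) x := by
  have hμB : 0 < μ B := (pos_iff_ne_zero.2 hμN).trans_le (measure_mono hNB)
  have hint : ∫⁻ y in B, ENNReal.ofReal |N.indicator 1 y| ∂μ = μ N := by
    rw [lintegral_abs_indicator_one hN, Measure.restrict_apply hN, Set.inter_eq_left.2 hNB]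
  rw [← hint]
  exact le_iSup₂_of_le B hB (le_iSup₂_of_le hx hμB le_rfl)

-- Test the weak type inequality on the indicator of `N`, whose average over each `B ∈ S` is at
-- least `μ N / K`.
lemma HasWeakTypeOneOne.exists_measure_sUnion_le (h : HasWeakTypeOneOne (maximalOp d μ F) μ) :
    ∃ C : ℝ≥0∞, C ≠ ⊤ ∧ ∀ (S : Set (Set (Fin d → ℝ))) (N : Set (Fin d → ℝ)) (K : ℝ≥0∞),
      S ⊆ F → MeasurableSet N → μ N ≠ 0 → K ≠ ⊤ → (∀ B ∈ S, N ⊆ B ∧ μ B ≤ K) →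
        μ (⋃₀ S) ≤ C * K := by
  obtain ⟨C, hC, hweak⟩ := h
  refine ⟨ENNReal.ofReal (2 * C), ENNReal.ofReal_ne_top, fun S N K hSF hN hμN hK hS ↦ ?_⟩
  obtain rfl | ⟨B₀, hB₀⟩ := S.eq_empty_or_nonempty
  · simp
  have hNK : μ N ≤ K := (measure_mono (hS B₀ hB₀).1).trans (hS B₀ hB₀).2
  have hNtop : μ N ≠ ⊤ := ne_top_of_le_ne_top hK hNK
  have hK0 : K ≠ 0 := ((pos_iff_ne_zero.2 hμN).trans_le hNK).ne'
  have hm : 0 < (μ N).toReal := ENNReal.toReal_pos hμN hNtop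
  have hκ : 0 < K.toReal := ENNReal.toReal_pos hK0 hK
  have hlam : 0 < (μ N).toReal / (2 * K.toReal) := by positivity
  have hsub : ⋃₀ S ⊆ {x | ENNReal.ofReal ((μ N).toReal / (2 * K.toReal)) <
      maximalOp d μ F (N.indicator 1) x} := by
    rintro x ⟨B, hB, hx⟩
    calc ENNReal.ofReal ((μ N).toReal / (2 * K.toReal))
        < ENNReal.ofReal ((μ N).toReal / K.toReal) := by
          rw [ENNReal.ofReal_lt_ofReal_iff (by positivity)]
          exact div_lt_div_of_pos_left hm hκ (by linarith)
      _ = μ N / K := by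
          rw [ENNReal.ofReal_div_of_pos hκ, ENNReal.ofReal_toReal hNtop, ENNReal.ofReal_toReal hK]
      _ ≤ μ N / μ B := ENNReal.div_le_div_left (hS B hB).2 _
      _ ≤ _ := div_measure_le_maximalOp_indicator hN (hSF hB) (hS B hB).1 hμN hx
  have hint : Integrable (N.indicator (1 : (Fin d → ℝ) → ℝ)) μ :=
    (integrable_indicator_iff hN).2 (integrableOn_const hNtop)
  calc μ (⋃₀ S) ≤ _ := measure_mono hsub
    _ ≤ _ := hweak _ hint _ hlam
    _ = ENNReal.ofReal (C / ((μ N).toReal / (2 * K.toReal))) *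
          ENNReal.ofReal (μ N).toReal := by
        rw [lintegral_abs_indicator_one hN, ENNReal.ofReal_toReal hNtop]
    _ = ENNReal.ofReal (2 * C * K.toReal) := by
        rw [← ENNReal.ofReal_mul (by positivity)]
        congr 1
        field_simp
    _ = ENNReal.ofReal (2 * C) * K := by
        rw [ENNReal.ofReal_mul (by positivity), ENNReal.ofReal_toReal hK]

lemma not_hasWeakTypeOneOne_maximalOp_of_disjoint {c : ℝ≥0∞} (hc : c ≠ ⊤)
    (h : ∀ n : ℕ, ∃ (B G : Fin n → Set (Fin d → ℝ)) (N : Set (Fin d → ℝ)),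
      (∀ k, B k ∈ F) ∧ (∀ k, MeasurableSet (G k)) ∧ Pairwise (Function.onFun Disjoint G) ∧
      (∀ k, G k ⊆ B k) ∧ MeasurableSet N ∧ μ N ≠ 0 ∧ (∀ k, N ⊆ B k) ∧ (∀ k, μ (B k) ≠ ⊤) ∧
      ∀ j k, μ (B j) ≤ c * μ (G k)) :
    ¬ HasWeakTypeOneOne (maximalOp d μ F) μ := by
  intro hweak
  obtain ⟨C, hC, hunion⟩ := hweak.exists_measure_sUnion_le
  obtain ⟨n, hn⟩ := ENNReal.exists_nat_gt (ENNReal.mul_ne_top hc hC)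
  obtain ⟨B, G, N, hBF, hG, hdisj, hGB, hN, hμN, hNB, hBtop, hBG⟩ := h n
  have : NeZero n := ⟨by rintro rfl; simp at hn⟩
  obtain ⟨j, hj⟩ := Finite.exists_max fun j ↦ μ (B j)
  have hBj : μ (B j) ≠ 0 := ((pos_iff_ne_zero.2 hμN).trans_le (measure_mono (hNB j))).ne'
  refine hn.not_ge ((ENNReal.mul_le_mul_iff_left hBj (hBtop j)).1 ?_)
  calc n * μ (B j) = ∑ _k : Fin n, μ (B j) := by simp
    _ ≤ ∑ k, c * μ (G k) := Finset.sum_le_sum fun k _ ↦ hBG j k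
    _ = c * μ (⋃ k, G k) := by rw [measure_iUnion hdisj hG, tsum_fintype, Finset.mul_sum]
    _ ≤ c * μ (⋃₀ Set.range B) := by
        rw [Set.sUnion_range]
        gcongr
        exact hGB _
    _ ≤ c * (C * μ (B j)) := by
        gcongr
        refine hunion _ N _ (Set.range_subset_iff.2 hBF) hN hμN (hBtop j) ?_
        exact Set.forall_mem_range.2 fun k ↦ ⟨hNB k, hj k⟩
    _ = c * C * μ (B j) := (mul_assoc _ _ _).symm

end WeakType

section ExpMeasure

variable {ι : Type*} [Fintype ι]

/-- The measure `exp (-∑ i, x i) dx` on `ℝ^ι`. Away from the boundary of the orthant it is a model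
of the Laguerre measure on which translations act by scalars. -/
noncomputable def expMeasure (ι : Type*) [Fintype ι] : Measure (ι → ℝ) :=
  volume.withDensity fun x ↦ ENNReal.ofReal (Real.exp (-∑ i, x i))

instance : IsLocallyFiniteMeasure (expMeasure ι) :=
  .withDensity_ofReal (by fun_prop)

instance : (expMeasure ι).IsOpenPosMeasure :=
  (withDensity_absolutelyContinuous' (by fun_prop) (by simp [Real.exp_pos])).isOpenPosMeasure

lemma expMeasure_preimage_sub_right (w : ι → ℝ) {E : Set (ι → ℝ)} (hE : MeasurableSet E) :
    expMeasure ι ((· - w) ⁻¹' E) = ENNReal.ofReal (Real.exp (-∑ i, w i)) * expMeasure ι E := by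
  have hdens (x : ι → ℝ) : ENNReal.ofReal (Real.exp (-∑ i, x i)) =
      ENNReal.ofReal (Real.exp (-∑ i, w i)) *
        ENNReal.ofReal (Real.exp (-∑ i, (x - w) i)) := by
    rw [← ENNReal.ofReal_mul (Real.exp_pos _).le, ← Real.exp_add]
    congr 2
    simp only [Pi.sub_apply, Finset.sum_sub_distrib]
    ring
  rw [expMeasure, withDensity_apply _ (measurable_sub_const w hE), withDensity_apply _ hE,
    ← (measurePreserving_sub_right volume w).setLIntegral_comp_preimage hE (by fun_prop),
    ← lintegral_const_mul' _ _ ENNReal.ofReal_ne_top]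
  exact lintegral_congr hdens

-- Each of the two translates carries the factor `exp (-1)`, and `2 * exp (-1) ≤ 3 / 4`.
lemma expMeasure_le_four_mul_of_diff_subset {D G : Set (ι → ℝ)} (hD : MeasurableSet D)
    (hDtop : expMeasure ι D ≠ ⊤) {v w : ι → ℝ} (hv : ∑ i, v i = 1) (hw : ∑ i, w i = 1)
    (h : D \ G ⊆ (· - v) ⁻¹' D ∪ (· - w) ⁻¹' D) :
    expMeasure ι D ≤ 4 * expMeasure ι G := by
  have hexp : 8 * ENNReal.ofReal (Real.exp (-1)) ≤ 3 := by
    rw [← ENNReal.ofReal_ofNat 8, ← ENNReal.ofReal_mul (by norm_num), ← ENNReal.ofReal_ofNat 3]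
    refine ENNReal.ofReal_le_ofReal ?_
    rw [Real.exp_neg, ← div_eq_mul_inv, div_le_iff₀ (Real.exp_pos 1)]
    linarith [Real.exp_one_gt_d9]
  have hdiff : expMeasure ι (D \ G) ≤ 2 * ENNReal.ofReal (Real.exp (-1)) * expMeasure ι D :=
    calc expMeasure ι (D \ G)
        ≤ expMeasure ι ((· - v) ⁻¹' D) + expMeasure ι ((· - w) ⁻¹' D) :=
          (measure_mono h).trans (measure_union_le _ _)
      _ = _ := by
          rw [expMeasure_preimage_sub_right v hD, expMeasure_preimage_sub_right w hD, hv, hw]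
          ring
  have htop : 3 * expMeasure ι D ≠ ⊤ := ENNReal.mul_ne_top ENNReal.ofNat_ne_top hDtop
  refine (ENNReal.add_le_add_iff_right htop).1 ?_
  calc expMeasure ι D + 3 * expMeasure ι D = 4 * expMeasure ι D := by ring
    _ ≤ 4 * (expMeasure ι G + expMeasure ι (D \ G)) := by
        gcongr
        exact tsub_le_iff_left.1 le_measure_sdiff
    _ ≤ 4 * (expMeasure ι G + 2 * ENNReal.ofReal (Real.exp (-1)) * expMeasure ι D) := by gcongr
    _ = 4 * expMeasure ι G + 8 * ENNReal.ofReal (Real.exp (-1)) * expMeasure ι D := by ring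
    _ ≤ 4 * expMeasure ι G + 3 * expMeasure ι D := by gcongr

end ExpMeasure

section LaguerreComparison

lemma rpow_le_rpow_abs_mul_rpow {x y c : ℝ} (hx : 0 < x) (hy : 0 < y) (hxy : x ≤ c * y)
    (hyx : y ≤ c * x) (a : ℝ) : x ^ a ≤ c ^ |a| * y ^ a := by
  have hc : 0 < c := pos_of_mul_pos_left (hx.trans_le hxy) hy.le
  obtain ha | ha := le_total 0 a
  · rw [abs_of_nonneg ha, ← Real.mul_rpow hc.le hy.le]
    exact Real.rpow_le_rpow hx.le hxy ha
  · rw [abs_of_nonpos ha, Real.rpow_neg hc.le, ← Real.inv_rpow hc.le,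
      ← Real.mul_rpow (inv_nonneg.2 hc.le) hy.le]
    exact Real.rpow_le_rpow_of_nonpos (by positivity) ((inv_mul_le_iff₀ hc).2 hyx) ha

variable {d : ℕ} {α : Fin d → ℝ} {a c : ℝ} {E G : Set (Fin d → ℝ)}

lemma bounds_of_mem_Icc {x : Fin d → ℝ} (ha : 0 < a) (hc : 0 < c)
    (hx : x ∈ Set.Icc (fun _ ↦ a / c) (fun _ ↦ c * a)) (i : Fin d) :
    0 < x i ∧ x i ≤ c * a ∧ a ≤ c * x i :=
  ⟨(div_pos ha hc).trans_le (hx.1 i), hx.2 i, (div_le_iff₀' hc).1 (hx.1 i)⟩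

lemma laguerreMeasure_le_mul_expMeasure (ha : 0 < a) (hc : 0 < c) (hE : MeasurableSet E)
    (hEbox : E ⊆ Set.Icc (fun _ ↦ a / c) (fun _ ↦ c * a)) :
    laguerreMeasure d α E ≤
      ENNReal.ofReal (∏ i, c ^ |α i| * a ^ α i) * expMeasure (Fin d) E := by
  rw [laguerreMeasure, expMeasure, withDensity_apply _ hE, withDensity_apply _ hE,
    ← lintegral_const_mul' _ _ ENNReal.ofReal_ne_top]
  refine setLIntegral_mono' hE fun x hx ↦ ?_
  rw [← ENNReal.ofReal_mul (Finset.prod_nonneg fun i _ ↦ by positivity), ← Finset.sum_neg_distrib,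
    Real.exp_sum, ← Finset.prod_mul_distrib]
  refine ENNReal.ofReal_le_ofReal
    (Finset.prod_le_prod (fun i _ ↦ by positivity) fun i _ ↦ ?_)
  obtain ⟨hpos, hle, hge⟩ := bounds_of_mem_Icc ha hc (hEbox hx) i
  rw [abs_of_pos hpos]
  gcongr
  exact rpow_le_rpow_abs_mul_rpow hpos ha hle hge _

lemma mul_expMeasure_le_mul_laguerreMeasure (ha : 0 < a) (hc : 0 < c) (hE : MeasurableSet E)
    (hEbox : E ⊆ Set.Icc (fun _ ↦ a / c) (fun _ ↦ c * a)) :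
    ENNReal.ofReal (∏ i, a ^ α i) * expMeasure (Fin d) E ≤
      ENNReal.ofReal (∏ i, c ^ |α i|) * laguerreMeasure d α E := by
  rw [laguerreMeasure, expMeasure, withDensity_apply _ hE, withDensity_apply _ hE,
    ← lintegral_const_mul' _ _ ENNReal.ofReal_ne_top,
    ← lintegral_const_mul' _ _ ENNReal.ofReal_ne_top]
  refine setLIntegral_mono' hE fun x hx ↦ ?_
  rw [← ENNReal.ofReal_mul (Finset.prod_nonneg fun i _ ↦ by positivity),
    ← ENNReal.ofReal_mul (Finset.prod_nonneg fun i _ ↦ by positivity), ← Finset.sum_neg_distrib,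
    Real.exp_sum, ← Finset.prod_mul_distrib, ← Finset.prod_mul_distrib]
  refine ENNReal.ofReal_le_ofReal
    (Finset.prod_le_prod (fun i _ ↦ by positivity) fun i _ ↦ ?_)
  obtain ⟨hpos, hle, hge⟩ := bounds_of_mem_Icc ha hc (hEbox hx) i
  rw [abs_of_pos hpos, ← mul_assoc]
  gcongr
  exact rpow_le_rpow_abs_mul_rpow ha hpos hge hle _

lemma laguerreMeasure_le_mul_of_expMeasure_le (ha : 0 < a) (hc : 0 < c) (hE : MeasurableSet E)
    (hEbox : E ⊆ Set.Icc (fun _ ↦ a / c) (fun _ ↦ c * a)) (hG : MeasurableSet G)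
    (hGbox : G ⊆ Set.Icc (fun _ ↦ a / c) (fun _ ↦ c * a)) {b : ℝ≥0∞}
    (h : expMeasure (Fin d) E ≤ b * expMeasure (Fin d) G) :
    laguerreMeasure d α E ≤
      b * ENNReal.ofReal (∏ i, c ^ |α i|) ^ 2 * laguerreMeasure d α G := by
  calc laguerreMeasure d α E
      ≤ ENNReal.ofReal (∏ i, c ^ |α i| * a ^ α i) * expMeasure (Fin d) E :=
        laguerreMeasure_le_mul_expMeasure ha hc hE hEbox
    _ ≤ ENNReal.ofReal (∏ i, c ^ |α i| * a ^ α i) * (b * expMeasure (Fin d) G) := by gcongr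
    _ = b * ENNReal.ofReal (∏ i, c ^ |α i|) *
          (ENNReal.ofReal (∏ i, a ^ α i) * expMeasure (Fin d) G) := by
        rw [Finset.prod_mul_distrib,
          ENNReal.ofReal_mul (Finset.prod_nonneg fun i _ ↦ by positivity)]
        ring
    _ ≤ b * ENNReal.ofReal (∏ i, c ^ |α i|) *
          (ENNReal.ofReal (∏ i, c ^ |α i|) * laguerreMeasure d α G) := by
        exact mul_le_mul_right (mul_expMeasure_le_mul_laguerreMeasure ha hc hG hGbox) _
    _ = _ := by ring

lemma laguerreMeasure_ne_top (ha : 0 < a) (hc : 0 < c) (hE : MeasurableSet E)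
    (hEbox : E ⊆ Set.Icc (fun _ ↦ a / c) (fun _ ↦ c * a)) : laguerreMeasure d α E ≠ ⊤ :=
  ne_top_of_le_ne_top
    (ENNReal.mul_ne_top ENNReal.ofReal_ne_top
      (ne_top_of_le_ne_top isCompact_Icc.measure_ne_top (measure_mono hEbox)))
    (laguerreMeasure_le_mul_expMeasure ha hc hE hEbox)

lemma laguerreMeasure_ne_zero (ha : 0 < a) (hc : 0 < c) (hE : IsOpen E) (hEne : E.Nonempty)
    (hEbox : E ⊆ Set.Icc (fun _ ↦ a / c) (fun _ ↦ c * a)) : laguerreMeasure d α E ≠ 0 := by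
  intro hzero
  have hle := mul_expMeasure_le_mul_laguerreMeasure (α := α) ha hc hE.measurableSet hEbox
  have hpos : 0 < ∏ i, a ^ α i := Finset.prod_pos fun i _ ↦ Real.rpow_pos_of_pos ha _
  rw [hzero, mul_zero, nonpos_iff_eq_zero, mul_eq_zero, ENNReal.ofReal_eq_zero] at hle
  exact hle.elim hpos.not_ge (hE.measure_ne_zero _ hEne)

end LaguerreComparison

section Seminorm

lemma seminorm_ball_subset_ball_of_add_le {E : Type*} [AddCommGroup E] [Module ℝ E]
    {p : Seminorm ℝ E} {y z : E} {r s : ℝ} (h : s + p (z - y) ≤ r) : p.ball y s ⊆ p.ball z r := by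
  intro x hx
  rw [Seminorm.mem_ball] at hx ⊢
  calc p (x - z) = p ((x - y) - (z - y)) := by rw [sub_sub_sub_cancel_right]
    _ ≤ p (x - y) + p (z - y) := map_sub_le_add p _ _
    _ < r := by linarith

lemma isOpen_seminorm_ball {E : Type*} [NormedAddCommGroup E] [NormedSpace ℝ E]
    [FiniteDimensional ℝ E] (p : Seminorm ℝ E) (z : E) (r : ℝ) : IsOpen (p.ball z r) :=
  isOpen_lt (p.convexOn.locallyLipschitz.continuous.comp (continuous_id.sub continuous_const))
    continuous_const

variable {ι : Type*}

/-- The part of the ball of radius `h ^ 2` centered at `z` within `2 * h + 1` of the hyperplane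
through `z` parallel to `x i = x j`, as measured by the difference of these coordinates. -/
def ballSlab (p : Seminorm ℝ (ι → ℝ)) (h : ℝ) (i j : ι) (z : ι → ℝ) : Set (ι → ℝ) :=
  p.ball z (h ^ 2) ∩ {x | |(x - z) i - (x - z) j| < 2 * h + 1}

lemma isOpen_ballSlab [Finite ι] (p : Seminorm ℝ (ι → ℝ)) (h : ℝ) (i j : ι) (z : ι → ℝ) :
    IsOpen (ballSlab p h i j z) := by
  cases nonempty_fintype ι
  exact (isOpen_seminorm_ball p z _).inter (isOpen_lt (by fun_prop) continuous_const)

lemma expMeasure_ball_eq_of_sum_eq [Fintype ι] (p : Seminorm ℝ (ι → ℝ)) (r : ℝ) {y z : ι → ℝ}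
    (hyz : ∑ i, y i = ∑ i, z i) :
    expMeasure ι (p.ball y r) = expMeasure ι (p.ball z r) := by
  have htranslate (w : ι → ℝ) : p.ball w r = (· - w) ⁻¹' p.ball 0 r := by
    ext x
    simp [Seminorm.mem_ball]
  have hmeas : MeasurableSet (p.ball 0 r) := (isOpen_seminorm_ball p 0 r).measurableSet
  rw [htranslate y, htranslate z, expMeasure_preimage_sub_right _ hmeas,
    expMeasure_preimage_sub_right _ hmeas, hyz]

variable [DecidableEq ι]

/-- The `k`-th of a row of points with the same coordinate sum, `4 * h ^ 2` times the cardinality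
of `ι`, whose values of `x i - x j` increase by `2 * (2 * h + 1)` at each step. -/
def slabCenter (h : ℝ) (i j : ι) (k : ℕ) : ι → ℝ :=
  (fun _ ↦ 4 * h ^ 2) + (k * (2 * h + 1)) • (Pi.single i 1 - Pi.single j 1)

lemma sum_slabCenter [Fintype ι] (h : ℝ) (i j : ι) (k : ℕ) :
    ∑ l, slabCenter h i j k l = Fintype.card ι * (4 * h ^ 2) := by
  simp [slabCenter, Finset.sum_add_distrib, ← Finset.mul_sum]

lemma slabCenter_apply_sub_apply (h : ℝ) {i j : ι} (hij : i ≠ j) (k : ℕ) :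
    slabCenter h i j k i - slabCenter h i j k j = 2 * (k * (2 * h + 1)) := by
  simp only [slabCenter, Pi.add_apply, Pi.smul_apply, Pi.sub_apply, Pi.single_eq_same,
    Pi.single_eq_of_ne hij, Pi.single_eq_of_ne hij.symm, smul_eq_mul]
  ring

lemma pairwise_disjoint_ballSlab_slabCenter (p : Seminorm ℝ (ι → ℝ)) {i j : ι} (hij : i ≠ j)
    {h : ℝ} (hh : 0 ≤ h) :
    Pairwise (Function.onFun Disjoint fun k ↦ ballSlab p h i j (slabCenter h i j k)) := by
  refine pairwise_disjoint_on _ |>.2 fun k l hkl ↦ Set.disjoint_left.2 ?_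
  rintro x ⟨-, hxk⟩ ⟨-, hxl⟩
  rw [Set.mem_ofPred_eq] at hxk hxl
  have hkl' : (k : ℝ) + 1 ≤ l := by exact_mod_cast hkl
  have hk := (abs_lt.1 hxk).2
  have hl := (abs_lt.1 hxl).1
  simp only [Pi.sub_apply] at hk hl
  nlinarith [slabCenter_apply_sub_apply h hij k, slabCenter_apply_sub_apply h hij l]

lemma exists_forall_seminorm_slabCenter_sub_le (p : Seminorm ℝ (ι → ℝ)) (i j : ι) (n : ℕ) :
    ∃ h : ℝ, 0 < h ∧ ∀ k < n, p (slabCenter h i j k - fun _ ↦ 4 * h ^ 2) ≤ h ^ 2 / 2 := by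
  set b := p (Pi.single i 1 - Pi.single j 1)
  have hnb : 0 ≤ n * b := mul_nonneg n.cast_nonneg (apply_nonneg p _)
  refine ⟨6 * n * b + 1, by linarith, fun k hk ↦ ?_⟩
  set h := 6 * n * b + 1 with hh
  have hh1 : 1 ≤ h := by linarith
  have hsq : h * (h - 1) ≤ h ^ 2 := by linarith
  have hkn : (k : ℝ) ≤ n := by exact_mod_cast hk.le
  rw [slabCenter, add_sub_cancel_left, map_smul_eq_mul, Real.norm_of_nonneg (by positivity)]
  calc k * (2 * h + 1) * b ≤ n * (3 * h) * b := by gcongr; linarith [hh1]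
    _ = h * (h - 1) / 2 := by rw [hh]; ring
    _ ≤ h ^ 2 / 2 := by gcongr

/-- A seminorm on `ℝ^ι` dominating every coordinate, such that in its ball of radius `h ^ 2` every
point with `x i - x j ≥ 2 * h + 1` can be moved towards the hyperplane `x i = x j` by the vector
`(h + 1) e_i - h e_j` without leaving the ball. That vector has coordinate sum `1`, so
`expMeasure` concentrates at distance at most `2 * h + 1` from the hyperplane, which is much less
than the radius. -/
structure DescendsToDiagonal (p : Seminorm ℝ (ι → ℝ)) : Prop where
  abs_apply_le : ∀ x i, |x i| ≤ p x
  descend : ∀ ⦃i j⦄, i ≠ j → ∀ ⦃h : ℝ⦄, 0 ≤ h → ∀ ⦃x : ι → ℝ⦄, p x < h ^ 2 →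
    2 * h + 1 ≤ x i - x j → p (x - (Pi.single i (h + 1) - Pi.single j h)) < h ^ 2

namespace DescendsToDiagonal

variable {p : Seminorm ℝ (ι → ℝ)}

lemma ball_subset_Icc (hp : DescendsToDiagonal p) {r : ℝ} {z : ι → ℝ}
    (hz : p (z - fun _ ↦ 4 * r) ≤ r) :
    p.ball z r ⊆ Set.Icc (fun _ ↦ 4 * r / 2) (fun _ ↦ 2 * (4 * r)) := by
  intro x hx
  have hbound (l : ι) : |x l - 4 * r| ≤ 2 * r :=
    calc |x l - 4 * r| ≤ p (x - fun _ ↦ 4 * r) := hp.abs_apply_le (x - fun _ ↦ 4 * r) l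
      _ = p ((x - z) + (z - fun _ ↦ 4 * r)) := by rw [sub_add_sub_cancel]
      _ ≤ p (x - z) + p (z - fun _ ↦ 4 * r) := map_add_le_add p _ _
      _ ≤ 2 * r := by linarith [p.mem_ball.1 hx]
  have hr : 0 ≤ r := (apply_nonneg p _).trans hz
  constructor <;> intro l <;> dsimp only <;> linarith [abs_le.1 (hbound l)]

variable [Fintype ι]

lemma expMeasure_ball_ne_top (hp : DescendsToDiagonal p) (z : ι → ℝ) (r : ℝ) :
    expMeasure ι (p.ball z r) ≠ ⊤ := by
  refine (measure_mono fun x hx ↦ ?_).trans_lt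
    (measure_closedBall_lt_top (x := z) (r := max r 0)) |>.ne
  rw [mem_closedBall_iff_norm, pi_norm_le_iff_of_nonneg (le_max_right _ _)]
  exact fun l ↦ (hp.abs_apply_le _ l).trans ((p.mem_ball.1 hx).le.trans (le_max_left _ _))

lemma expMeasure_ball_le_four_mul_ballSlab (hp : DescendsToDiagonal p) {i j : ι} (hij : i ≠ j)
    {h : ℝ} (hh : 0 ≤ h) (z : ι → ℝ) :
    expMeasure ι (p.ball z (h ^ 2)) ≤ 4 * expMeasure ι (ballSlab p h i j z) := by
  have hsum (k l : ι) : ∑ m, (Pi.single k (h + 1) - Pi.single l h : ι → ℝ) m = 1 := by simp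
  have hmem {k l : ι} (hkl : k ≠ l) {x : ι → ℝ} (hx : x ∈ p.ball z (h ^ 2))
      (hxkl : 2 * h + 1 ≤ (x - z) k - (x - z) l) :
      x - (Pi.single k (h + 1) - Pi.single l h) ∈ p.ball z (h ^ 2) := by
    rw [Seminorm.mem_ball, sub_right_comm]
    exact hp.descend hkl hh hx hxkl
  refine expMeasure_le_four_mul_of_diff_subset (isOpen_seminorm_ball p z _).measurableSet
    (hp.expMeasure_ball_ne_top z _) (hsum i j) (hsum j i) ?_
  rintro x ⟨hx, hxslab⟩
  have hfar : 2 * h + 1 ≤ |(x - z) i - (x - z) j| := not_lt.1 fun hlt ↦ hxslab ⟨hx, hlt⟩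
  obtain hij' | hji' := le_abs.1 hfar
  · exact Or.inl (hmem hij hx hij')
  · exact Or.inr (hmem hij.symm hx (by linarith))

end DescendsToDiagonal

end Seminorm

section Shapes

/-- The Euclidean norm, as a seminorm on the space of functions `ι → ℝ`, whose own norm is the
supremum norm. -/
noncomputable def euclideanSeminorm (ι : Type*) [Fintype ι] : Seminorm ℝ (ι → ℝ) :=
  (normSeminorm ℝ (EuclideanSpace ℝ ι)).comp (WithLp.linearEquiv 2 ℝ (ι → ℝ)).symm.toLinearMap

variable {ι : Type*} [Fintype ι]

lemma euclideanSeminorm_apply (x : ι → ℝ) : euclideanSeminorm ι x = √(∑ i, x i ^ 2) := by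
  simp [euclideanSeminorm, EuclideanSpace.norm_eq]

variable [DecidableEq ι]

lemma descendsToDiagonal_normSeminorm : DescendsToDiagonal (normSeminorm ℝ (ι → ℝ)) where
  abs_apply_le x i := norm_le_pi_norm x i
  descend i j hij h hh x hx hxij := by
    have hh2 : 0 < h ^ 2 := (apply_nonneg _ x).trans_lt hx
    rw [coe_normSeminorm, pi_norm_lt_iff hh2] at hx ⊢
    intro k
    have hi := abs_lt.1 (hx i)
    have hj := abs_lt.1 (hx j)
    rw [Pi.sub_apply, Pi.sub_apply, Real.norm_eq_abs, abs_lt]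
    obtain rfl | hki := eq_or_ne k i
    · rw [Pi.single_eq_same, Pi.single_eq_of_ne hij]
      constructor <;> linarith
    obtain rfl | hkj := eq_or_ne k j
    · rw [Pi.single_eq_same, Pi.single_eq_of_ne hki]
      constructor <;> linarith
    · simpa [hki, hkj, abs_lt] using hx k

lemma descendsToDiagonal_euclideanSeminorm : DescendsToDiagonal (euclideanSeminorm ι) := by
  have habs (x : ι → ℝ) (i : ι) : |x i| ≤ euclideanSeminorm ι x := by
    rw [euclideanSeminorm_apply]
    exact Real.abs_le_sqrt (Finset.single_le_sum (f := fun l ↦ x l ^ 2)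
      (fun l _ ↦ sq_nonneg _) (Finset.mem_univ i))
  refine ⟨habs, fun i j hij h hh x hx hxij ↦ lt_of_le_of_lt ?_ hx⟩
  have hj := (abs_lt.1 ((habs x j).trans_lt hx)).1
  have hdecrease :
      ∑ l, (x l ^ 2 - (x - (Pi.single i (h + 1) - Pi.single j h) : ι → ℝ) l ^ 2) =
      (x i ^ 2 - (x i - (h + 1)) ^ 2) + (x j ^ 2 - (x j + h) ^ 2) := by
    rw [Fintype.sum_eq_add i j hij fun l ⟨hli, hlj⟩ ↦ by simp [hli, hlj]]
    simp [hij, hij.symm]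
  have hnonneg : 0 ≤ (x i ^ 2 - (x i - (h + 1)) ^ 2) + (x j ^ 2 - (x j + h) ^ 2) := by
    linarith [mul_le_mul_of_nonneg_left hxij hh]
  rw [← hdecrease, Finset.sum_sub_distrib, sub_nonneg] at hnonneg
  rw [euclideanSeminorm_apply, euclideanSeminorm_apply]
  exact Real.sqrt_le_sqrt hnonneg

end Shapes

section Laguerre

variable {d : ℕ}

lemma Icc_subset_posOrthant {a b : Fin d → ℝ} (ha : a ∈ posOrthant d) :
    Set.Icc a b ⊆ posOrthant d :=
  fun _ hx i ↦ (ha i).trans_le (hx.1 i)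

theorem not_hasWeakTypeOneOne_maximalOp_laguerreMeasure {p : Seminorm ℝ (Fin d → ℝ)}
    (hp : DescendsToDiagonal p) {F : Set (Set (Fin d → ℝ))}
    (hF : ∀ z r, 0 < r → p.ball z r ⊆ posOrthant d → p.ball z r ∈ F) (hd : 2 ≤ d)
    (α : Fin d → ℝ) :
    ¬ HasWeakTypeOneOne (maximalOp d ((laguerreMeasure d α).restrict (posOrthant d)) F)
      ((laguerreMeasure d α).restrict (posOrthant d)) := by
  have : Nontrivial (Fin d) := Fin.nontrivial_iff_two_le.2 hd
  obtain ⟨i, j, hij⟩ := exists_pair_ne (Fin d)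
  refine not_hasWeakTypeOneOne_maximalOp_of_disjoint
    (c := 4 * ENNReal.ofReal (∏ i, (2 : ℝ) ^ |α i|) ^ 2) (by finiteness) fun n ↦ ?_
  obtain ⟨h, hh, hcenter⟩ := exists_forall_seminorm_slabCenter_sub_le p i j n
  set box : Set (Fin d → ℝ) := Set.Icc (fun _ ↦ 4 * h ^ 2 / 2) (fun _ ↦ 2 * (4 * h ^ 2))
  set B : Fin n → Set (Fin d → ℝ) := fun k ↦ p.ball (slabCenter h i j k) (h ^ 2)
  set G : Fin n → Set (Fin d → ℝ) := fun k ↦ ballSlab p h i j (slabCenter h i j k)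
  set N : Set (Fin d → ℝ) := p.ball (fun _ ↦ 4 * h ^ 2) (h ^ 2 / 2)
  have ha : 0 < 4 * h ^ 2 := by positivity
  have hr : 0 < h ^ 2 := by positivity
  have hB (k) : MeasurableSet (B k) := (isOpen_seminorm_ball p _ _).measurableSet
  have hG (k) : MeasurableSet (G k) := (isOpen_ballSlab p h i j _).measurableSet
  have hN : IsOpen N := isOpen_seminorm_ball p _ _
  have hGB (k) : G k ⊆ B k := Set.inter_subset_left
  have hNB (k) : N ⊆ B k :=
    seminorm_ball_subset_ball_of_add_le (by linarith [hcenter k k.2])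
  have hBbox (k) : B k ⊆ box :=
    hp.ball_subset_Icc ((hcenter k k.2).trans (half_le_self hr.le))
  have hNbox : N ⊆ box :=
    (Seminorm.ball_mono (half_le_self hr.le)).trans (hp.ball_subset_Icc (by simp [hr.le]))
  have hbox : box ⊆ posOrthant d := Icc_subset_posOrthant fun _ ↦ half_pos ha
  have hrestrict {E : Set (Fin d → ℝ)} (hE : E ⊆ box) :=
    (laguerreMeasure d α).restrict_eq_self (hE.trans hbox)
  refine ⟨B, G, N, fun k ↦ hF _ _ hr ((hBbox k).trans hbox), hG,
    (pairwise_disjoint_ballSlab_slabCenter p hij hh.le).comp_of_injective Fin.val_injective,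
    hGB, hN.measurableSet, ?_, hNB, fun k ↦ ?_, fun k l ↦ ?_⟩
  · rw [hrestrict hNbox]
    exact laguerreMeasure_ne_zero ha two_pos hN ⟨_, p.mem_ball_self (by positivity)⟩ hNbox
  · rw [hrestrict (hBbox k)]
    exact laguerreMeasure_ne_top ha two_pos (hB k) (hBbox k)
  · rw [hrestrict (hBbox k), hrestrict ((hGB l).trans (hBbox l))]
    refine laguerreMeasure_le_mul_of_expMeasure_le ha two_pos (hB k) (hBbox k) (hG l)
      ((hGB l).trans (hBbox l)) ?_
    rw [expMeasure_ball_eq_of_sum_eq p _ ((sum_slabCenter h i j k).trans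
      (sum_slabCenter h i j l).symm)]
    exact hp.expMeasure_ball_le_four_mul_ballSlab hij hh.le _

lemma normSeminorm_ball_mem_cubesPlus {z : Fin d → ℝ} {r : ℝ} (hr : 0 < r)
    (hball : (normSeminorm ℝ (Fin d → ℝ)).ball z r ⊆ posOrthant d) :
    (normSeminorm ℝ (Fin d → ℝ)).ball z r ∈ cubesPlus d := by
  refine ⟨z, r, hball (Seminorm.mem_ball_self _ hr), hr, ?_⟩
  have hmem (y : Fin d → ℝ) :
      y ∈ (normSeminorm ℝ (Fin d → ℝ)).ball z r ↔ ∀ i, |z i - y i| < r := by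
    rw [Seminorm.mem_ball, map_sub_rev, coe_normSeminorm, pi_norm_lt_iff hr]
    rfl
  exact Set.ext fun y ↦ ⟨fun hy ↦ ⟨hball hy, (hmem y).1 hy⟩, fun hy ↦ (hmem y).2 hy.2⟩

lemma euclideanSeminorm_ball_mem_euclideanBallsPlus {z : Fin d → ℝ} {r : ℝ} (hr : 0 < r)
    (hball : (euclideanSeminorm (Fin d)).ball z r ⊆ posOrthant d) :
    (euclideanSeminorm (Fin d)).ball z r ∈ euclideanBallsPlus d := by
  refine ⟨z, r, hball (Seminorm.mem_ball_self _ hr), hr, ?_⟩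
  have hmem (y : Fin d → ℝ) :
      y ∈ (euclideanSeminorm (Fin d)).ball z r ↔ √(∑ i, (z i - y i) ^ 2) < r := by
    rw [Seminorm.mem_ball, map_sub_rev, euclideanSeminorm_apply]
    rfl
  exact Set.ext fun y ↦ ⟨fun hy ↦ ⟨hball hy, (hmem y).1 hy⟩, fun hy ↦ (hmem y).2 hy.2⟩

end Laguerre

theorem laguerre_maximal_not_weak_type_one_one_general (d : ℕ) (hd : 2 ≤ d) (α : Fin d → ℝ) :
    ¬ HasWeakTypeOneOne
        (maximalOp d ((laguerreMeasure d α).restrict (posOrthant d)) (cubesPlus d))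
        ((laguerreMeasure d α).restrict (posOrthant d)) ∧
      ¬ HasWeakTypeOneOne
        (maximalOp d ((laguerreMeasure d α).restrict (posOrthant d)) (euclideanBallsPlus d))
        ((laguerreMeasure d α).restrict (posOrthant d)) :=
  ⟨not_hasWeakTypeOneOne_maximalOp_laguerreMeasure descendsToDiagonal_normSeminorm
    (fun _ _ ↦ normSeminorm_ball_mem_cubesPlus) hd α,
  not_hasWeakTypeOneOne_maximalOp_laguerreMeasure descendsToDiagonal_euclideanSeminorm
    (fun _ _ ↦ euclideanSeminorm_ball_mem_euclideanBallsPlus) hd α⟩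

/-- For `d ≥ 2` and `α ∈ (-1,∞)^d`, neither the non-centered maximal operator over truncated
cubes of `ℝ^d_+` nor the one over truncated Euclidean balls of `ℝ^d_+` is of weak type (1,1)
with respect to `(ℝ^d_+, dμ_α)`. -/
theorem laguerre_maximal_not_weak_type_one_one (d : ℕ) (hd : 2 ≤ d) (α : Fin d → ℝ)
    (hα : ∀ i, -1 < α i) :
    (¬ ∃ C : ℝ, 0 < C ∧
      ∀ f : (Fin d → ℝ) → ℝ,
        Integrable f ((laguerreMeasure d α).restrict (posOrthant d)) →
        ∀ lam : ℝ, 0 < lam →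
          (laguerreMeasure d α).restrict (posOrthant d) {x | ENNReal.ofReal lam
              < maximalOp d ((laguerreMeasure d α).restrict (posOrthant d)) (cubesPlus d) f x}
            ≤ ENNReal.ofReal (C / lam)
              * ∫⁻ x, ENNReal.ofReal |f x| ∂((laguerreMeasure d α).restrict (posOrthant d)))
    ∧
    (¬ ∃ C : ℝ, 0 < C ∧
      ∀ f : (Fin d → ℝ) → ℝ,
        Integrable f ((laguerreMeasure d α).restrict (posOrthant d)) →
        ∀ lam : ℝ, 0 < lam →
          (laguerreMeasure d α).restrict (posOrthant d) {x | ENNReal.ofReal lam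
              < maximalOp d ((laguerreMeasure d α).restrict (posOrthant d))
                  (euclideanBallsPlus d) f x}
            ≤ ENNReal.ofReal (C / lam)
              * ∫⁻ x, ENNReal.ofReal |f x|
                  ∂((laguerreMeasure d α).restrict (posOrthant d))) :=
  laguerre_maximal_not_weak_type_one_one_general d hd α
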